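/- Consider the parametric multiset function F(S; (A, b)) = M₂(Σ_{x∈S} σ(Ax + b)) on finite multisets over ℝ^d, where A is a real matrix, b a real vector, σ : ℝ → ℝ is applied entrywise, and M₂ is a monotonically increasing vector-to-vector function. (i) If σ is nonnegative, then for every parameter choice (A, b) the function S ↦ F(S; (A, b)) is monotone: S ⊆ T implies F(S; (A,b)) ≤ F(T; (A,b)). (ii) If in addition σ is monotone (nondecreasing or nonincreasing), then there exist finite multisets S, T over ℝ^d with S ⊄ T such that F(S; (A, b)) ≤ F(T; (A, b)) for every parameter choice (A, b); in fact one may take S = {(x+y)/2} and T = {x, y} for any two distinct points x, y ∈ ℝ^d. -/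

import Mathlib

/-- The parametric multiset function `F(S; (A,b)) = M₂(∑_{x∈S} σ(Ax + b))`,
with `σ` applied entrywise. -/
noncomputable def deepSetsF {d p q : ℕ} (σ : ℝ → ℝ) (M2 : (Fin p → ℝ) → (Fin q → ℝ))
    (A : Matrix (Fin p) (Fin d) ℝ) (b : Fin p → ℝ) (S : Multiset (Fin d → ℝ)) :
    Fin q → ℝ :=
  M2 ((S.map (fun x => fun i => σ (A.mulVec x i + b i))).sum)

/-- A nonnegative function that is monotone or antitone satisfies `σ ((u + v) / 2) ≤ σ u + σ v`. -/
theorem apply_midpoint_le_add {σ : ℝ → ℝ} (hσ : ∀ t, 0 ≤ σ t) (h : Monotone σ ∨ Antitone σ)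
    (u v : ℝ) : σ ((u + v) / 2) ≤ σ u + σ v := by
  have hu := hσ u
  have hv := hσ v
  rcases h with h | h <;> rcases le_total u v with huv | huv
  · linarith [h (show (u + v) / 2 ≤ v by linarith)]
  · linarith [h (show (u + v) / 2 ≤ u by linarith)]
  · linarith [h (show u ≤ (u + v) / 2 by linarith)]
  · linarith [h (show v ≤ (u + v) / 2 by linarith)]

theorem deepSetsF_mono {d p q : ℕ} {σ : ℝ → ℝ} {M2 : (Fin p → ℝ) → (Fin q → ℝ)}
    (hM2 : Monotone M2) (hσ : ∀ t, 0 ≤ σ t) (A : Matrix (Fin p) (Fin d) ℝ) (b : Fin p → ℝ) :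
    Monotone (deepSetsF σ M2 A b) := by
  intro S T hST
  obtain ⟨U, rfl⟩ := Multiset.le_iff_exists_add.mp hST
  apply hM2
  rw [Multiset.map_add, Multiset.sum_add]
  refine le_add_of_nonneg_right (Multiset.sum_nonneg fun v hv => ?_)
  obtain ⟨x, -, rfl⟩ := Multiset.mem_map.mp hv
  exact fun i => hσ _

theorem deepSetsF_midpoint_le {d p q : ℕ} {σ : ℝ → ℝ} {M2 : (Fin p → ℝ) → (Fin q → ℝ)}
    (hM2 : Monotone M2) (hσ : ∀ t, 0 ≤ σ t) (h : Monotone σ ∨ Antitone σ)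
    (A : Matrix (Fin p) (Fin d) ℝ) (b : Fin p → ℝ) (x y : Fin d → ℝ) :
    deepSetsF σ M2 A b {(x + y) / 2} ≤ deepSetsF σ M2 A b {x, y} := by
  apply hM2
  intro i
  have hxy : (x + y) / 2 = (2⁻¹ : ℝ) • (x + y) := by
    ext j
    simp [div_eq_inv_mul]
  have key : A.mulVec ((x + y) / 2) i + b i
      = ((A.mulVec x i + b i) + (A.mulVec y i + b i)) / 2 := by
    rw [hxy, Matrix.mulVec_smul, Matrix.mulVec_add, Pi.smul_apply, Pi.add_apply, smul_eq_mul]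
    ring
  simpa [key] using apply_midpoint_le_add hσ h (A.mulVec x i + b i) (A.mulVec y i + b i)

theorem half_add_notMem_pair {d : ℕ} {x y : Fin d → ℝ} (hxy : x ≠ y) :
    (x + y) / 2 ∉ ({x, y} : Multiset (Fin d → ℝ)) := by
  intro hmem
  apply hxy
  ext j
  rcases (by simpa using hmem : (x + y) / 2 = x ∨ (x + y) / 2 = y) with h | h <;>
  · have hj := congrFun h j
    simp only [Pi.div_apply, Pi.add_apply, Pi.ofNat_apply] at hj
    linarith

/-- (i) If `σ` is nonnegative and `M₂` is monotonically increasing, then for every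
parameter choice `(A,b)` the function `S ↦ F(S;(A,b))` is monotone.
(ii) If in addition `σ` is monotone (nondecreasing or nonincreasing), then there
are multisets `S ⊄ T` with `F(S;(A,b)) ≤ F(T;(A,b))` for all `(A,b)`; in fact one
may take `S = {(x+y)/2}` and `T = {x,y}` for any distinct `x, y ∈ ℝ^d`. -/
theorem stmt8 {d p q : ℕ} (σ : ℝ → ℝ) (M2 : (Fin p → ℝ) → (Fin q → ℝ))
    (hM2 : Monotone M2) (hσ : ∀ t, 0 ≤ σ t) :
    (∀ (A : Matrix (Fin p) (Fin d) ℝ) (b : Fin p → ℝ) (S T : Multiset (Fin d → ℝ)),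
      S ≤ T → deepSetsF σ M2 A b S ≤ deepSetsF σ M2 A b T) ∧
    ((Monotone σ ∨ Antitone σ) →
      ∀ x y : Fin d → ℝ, x ≠ y →
        ¬ (({(x + y) / 2} : Multiset (Fin d → ℝ)) ≤ ({x, y} : Multiset (Fin d → ℝ))) ∧
        ∀ (A : Matrix (Fin p) (Fin d) ℝ) (b : Fin p → ℝ),
          deepSetsF σ M2 A b {(x + y) / 2} ≤ deepSetsF σ M2 A b {x, y}) := by
  exact ⟨fun A b S T hST => deepSetsF_mono hM2 hσ A b hST, fun h x y hxy =>
    ⟨fun hle => half_add_notMem_pair hxy (Multiset.singleton_le.mp hle),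
      fun A b => deepSetsF_midpoint_le hM2 hσ h A b x y⟩⟩
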